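/- arXiv:math/0209250 — 6 statements merged into one kernel-verified Lean document; each statement's English description precedes it below -/
import Mathlib

section
/- Let S and T be inverse semigroups with zero and let θ : S → T be a surjective, zero-reflecting, idempotent pure homomorphism. Then the universal groups G(S) and G(T) are isomorphic. -/
/-- The relators `(s)·(t)·((s·t))⁻¹` over pairs `s, t` with `s·t ≠ 0`, as elements of the
free group on `S ∖ {0}`. -/
def sgRelators (S : Type*) [SemigroupWithZero S] : Set (FreeGroup {s : S // s ≠ 0}) :=
  {r | ∃ s t u : {s : S // s ≠ 0}, (u : S) = (s : S) * (t : S) ∧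
       r = FreeGroup.of s * FreeGroup.of t * (FreeGroup.of u)⁻¹}

/-- The universal group `G(S)` of a semigroup with zero `S`: the free group on `S ∖ {0}`
modulo the normal closure of the relators. -/
abbrev UnivGroup (S : Type*) [SemigroupWithZero S] : Type _ :=
  FreeGroup {s : S // s ≠ 0} ⧸ Subgroup.normalClosure (sgRelators S)

/-- canonical generator -/
def ugOf {S : Type*} [SemigroupWithZero S] (s : {s : S // s ≠ 0}) : UnivGroup S :=
  QuotientGroup.mk (FreeGroup.of s)

theorem ugOf_mul {S : Type*} [SemigroupWithZero S] (s t u : {s : S // s ≠ 0})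
    (h : (u : S) = s * t) : ugOf u = ugOf s * ugOf t := by
  have : (QuotientGroup.mk (FreeGroup.of s * FreeGroup.of t * (FreeGroup.of u)⁻¹) :
      UnivGroup S) = 1 :=
    (QuotientGroup.eq_one_iff _).2 (Subgroup.subset_normalClosure ⟨s, t, u, h, rfl⟩)
  have h2 : ugOf s * ugOf t * (ugOf u)⁻¹ = 1 := this
  exact (mul_inv_eq_one.1 h2).symm

/-- universal property -/
def ugLift {S : Type*} [SemigroupWithZero S] {G : Type*} [Group G]
    (f : {s : S // s ≠ 0} → G)
    (hf : ∀ s t u : {s : S // s ≠ 0}, (u : S) = s * t → f u = f s * f t) :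
    UnivGroup S →* G :=
  QuotientGroup.lift _ (FreeGroup.lift f) (by
    have : Subgroup.normalClosure (sgRelators S) ≤ (FreeGroup.lift f).ker := by
      apply Subgroup.normalClosure_le_normal
      rintro r ⟨s, t, u, h, rfl⟩
      simp [MonoidHom.mem_ker, hf s t u h]
    intro x hx
    exact this hx)

theorem ugLift_of {S : Type*} [SemigroupWithZero S] {G : Type*} [Group G]
    (f : {s : S // s ≠ 0} → G)
    (hf : ∀ s t u : {s : S // s ≠ 0}, (u : S) = s * t → f u = f s * f t) (s) :
    ugLift f hf (ugOf s) = f s := by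
  simp [ugLift, ugOf]

theorem ug_hom_ext {S : Type*} [SemigroupWithZero S] {G : Type*} [Group G]
    (f g : UnivGroup S →* G) (h : ∀ s, f (ugOf s) = g (ugOf s)) : f = g := by
  apply QuotientGroup.monoidHom_ext
  apply FreeGroup.ext_hom
  exact h

/-- If `S` and `T` are inverse semigroups with zero and `θ : S → T` is a surjective,
zero-reflecting, idempotent pure homomorphism, then `G(S) ≅ G(T)`. -/
theorem univGroup_iso_of_idempotentPure {S T : Type*} [SemigroupWithZero S]
    [SemigroupWithZero T]
    (hSinv : ∀ s : S, ∃! t : S, s * t * s = s ∧ t * s * t = t)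
    (hTinv : ∀ s : T, ∃! t : T, s * t * s = s ∧ t * s * t = t)
    (θ : S → T)
    (hhom : ∀ s t : S, θ (s * t) = θ s * θ t)
    (hsurj : Function.Surjective θ)
    (hzero : ∀ s : S, θ s = 0 ↔ s = 0)
    (hip : ∀ a : S, θ a * θ a = θ a → a * a = a) :
    Nonempty (UnivGroup S ≃* UnivGroup T) := by
  have key : ∀ s t : {s : S // s ≠ 0}, θ s = θ t → ugOf s = ugOf t := by
    intro s t h
    obtain ⟨i, ⟨h1, h2⟩, -⟩ := hSinv s
    have hs0 : θ s ≠ 0 := fun h => s.2 ((hzero _).1 h)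
    have his : i * s ≠ 0 := by
      intro h0
      apply s.2
      rw [← h1, mul_assoc, h0, mul_zero]
    have hit : i * t ≠ 0 := by
      intro h0
      apply his
      rw [← hzero, hhom, h, ← hhom, h0, hzero]
    have hi : i ≠ 0 := by
      rintro rfl
      exact his (zero_mul _)
    have idem : ∀ e : {s : S // s ≠ 0}, (e : S) * e = e → ugOf e = 1 := by
      intro e he
      have := ugOf_mul e e e he.symm
      exact left_eq_mul.1 this
    have e1 : (i * s) * (i * s) = i * (s : S) := by
      rw [← mul_assoc, h2]
    have e2 : (i * t) * (i * t) = i * (t : S) := by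
      apply hip
      rw [hhom, ← h, ← hhom, ← hhom, e1]
    have a1 := ugOf_mul ⟨i, hi⟩ s ⟨_, his⟩ rfl
    have a2 := ugOf_mul ⟨i, hi⟩ t ⟨_, hit⟩ rfl
    rw [idem _ e1] at a1
    rw [idem _ e2] at a2
    exact mul_left_cancel (a1.symm.trans a2)
  choose σ hσ using hsurj
  have hσ0 : ∀ t : {t : T // t ≠ 0}, σ t ≠ 0 := by
    intro t h
    apply t.2
    rw [← hσ t, hzero, h]
  have hθ0 : ∀ s : {s : S // s ≠ 0}, θ s ≠ 0 := fun s h => s.2 ((hzero _).1 h)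
  let F : UnivGroup S →* UnivGroup T := ugLift (fun s => ugOf ⟨θ s, hθ0 s⟩) (by
    intro s t u h
    exact ugOf_mul _ _ _ (by simp only [h, hhom]))
  let K : UnivGroup T →* UnivGroup S := ugLift (fun t => ugOf ⟨σ t, hσ0 t⟩) (by
    intro s t u h
    have e : θ (σ s * σ t) = u := by rw [hhom, hσ, hσ, h]
    have h0 : σ s * σ t ≠ 0 := by
      intro h0
      apply u.2
      rw [← e, hzero, h0]
    rw [← ugOf_mul ⟨σ s, hσ0 s⟩ ⟨σ t, hσ0 t⟩ ⟨_, h0⟩ rfl]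
    apply key
    simp only [e, hσ])
  refine ⟨MonoidHom.toMulEquiv F K ?_ ?_⟩
  · apply ug_hom_ext
    intro s
    simp only [F, K, MonoidHom.comp_apply, ugLift_of, MonoidHom.id_apply]
    apply key
    simp only [hσ]
  · apply ug_hom_ext
    intro s
    simp only [F, K, MonoidHom.comp_apply, ugLift_of, MonoidHom.id_apply, hσ]
end

section
/- Let D ⊆ ℝⁿ be a Delone set of finite local complexity. Then the group G_D is finitely generated. -/
open Pointwise

/-- The relators `(x−y)·(y−z)·((x−z))⁻¹`, `x, y, z ∈ D`, as elements of the free group on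
the set of difference vectors `D − D`. -/
def pointRelators {E : Type*} [AddGroup E] (D : Set E) : Set (FreeGroup ↥(D - D)) :=
  {r | ∃ (x y z : E) (hx : x ∈ D) (hy : y ∈ D) (hz : z ∈ D),
    r = FreeGroup.of (⟨x - y, Set.sub_mem_sub hx hy⟩ : ↥(D - D)) *
        FreeGroup.of (⟨y - z, Set.sub_mem_sub hy hz⟩ : ↥(D - D)) *
        (FreeGroup.of (⟨x - z, Set.sub_mem_sub hx hz⟩ : ↥(D - D)))⁻¹}

/-- The group `G_D`, the universal group of the point-set semigroup of `D`: the free group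
on `D − D` modulo the normal closure of the relators. -/
abbrev GD {E : Type*} [AddGroup E] (D : Set E) : Type _ :=
  FreeGroup ↥(D - D) ⧸ Subgroup.normalClosure (pointRelators D)

theorem GD_mul_aux {E : Type*} [AddGroup E] (D : Set E) {x y z : E} (hx : x ∈ D) (hy : y ∈ D)
    (hz : z ∈ D) :
    (QuotientGroup.mk (FreeGroup.of (⟨x - z, Set.sub_mem_sub hx hz⟩ : ↥(D - D))) : GD D) =
    QuotientGroup.mk (FreeGroup.of (⟨x - y, Set.sub_mem_sub hx hy⟩ : ↥(D - D))) *
    QuotientGroup.mk (FreeGroup.of (⟨y - z, Set.sub_mem_sub hy hz⟩ : ↥(D - D))) := by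
  have h := (QuotientGroup.eq_one_iff (N := Subgroup.normalClosure (pointRelators D)) _).2
    (Subgroup.subset_normalClosure (s := pointRelators D) ⟨x, y, z, hx, hy, hz, rfl⟩)
  rw [QuotientGroup.mk_mul, QuotientGroup.mk_mul, QuotientGroup.mk_inv, mul_inv_eq_one] at h
  exact h.symm

/-- A Delone set of finite local complexity has finitely generated universal group `G_D`. -/
theorem GD_fg_of_flc {n : ℕ} (D : Set (EuclideanSpace ℝ (Fin n)))
    (hud : ∃ r > 0, ∀ x ∈ D, ∀ y ∈ D, x ≠ y → r ≤ dist x y)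
    (hrd : ∃ R > 0, ∀ c : EuclideanSpace ℝ (Fin n), ∃ x ∈ D, dist x c ≤ R)
    (hflc : ∀ (c : EuclideanSpace ℝ (Fin n)) (R : ℝ),
      ((D - D) ∩ Metric.closedBall c R).Finite) :
    Group.FG (GD D) := by
  obtain ⟨R, hR, hrd⟩ := hrd
  let f : ↥(D - D) → GD D := fun v => QuotientGroup.mk (FreeGroup.of v)
  let S : Set ↥(D - D) := {v | ‖v.1‖ ≤ 4 * R}
  have hS : S.Finite := by
    refine Set.Finite.of_finite_image (f := Subtype.val) ((hflc 0 (4 * R)).subset ?_)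
      Subtype.val_injective.injOn
    rintro _ ⟨v, hv, rfl⟩
    exact ⟨v.2, by simpa [S] using hv⟩
  have key : ∀ N : ℕ, ∀ x y, ∀ (hx : x ∈ D) (hy : y ∈ D), dist x y ≤ 4 * R + N * R →
      f ⟨x - y, Set.sub_mem_sub hx hy⟩ ∈ Subgroup.closure (f '' S) := by
    intro N
    induction N with
    | zero =>
      intro x y hx hy h
      refine Subgroup.subset_closure ⟨_, ?_, rfl⟩
      simpa [S, dist_eq_norm] using h
    | succ N ih =>
      intro x y hx hy h
      obtain ⟨z, hz, hzm⟩ := hrd (midpoint ℝ x y)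
      have h1 : dist x (midpoint ℝ x y) = 1 / 2 * dist x y := by
        rw [dist_left_midpoint]; norm_num
      have h2 : dist (midpoint ℝ x y) y = 1 / 2 * dist x y := by
        rw [dist_midpoint_right]; norm_num
      have h3 := dist_triangle x (midpoint ℝ x y) z
      have h4 := dist_triangle z (midpoint ℝ x y) y
      rw [dist_comm (midpoint ℝ x y) z] at h3
      push_cast at h
      have hN : 0 ≤ (N : ℝ) * R := by positivity
      have e : f ⟨x - y, Set.sub_mem_sub hx hy⟩ = _ := GD_mul_aux D hx hz hy
      rw [e]
      exact mul_mem (ih x z hx hz (by linarith)) (ih z y hz hy (by linarith))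
  have htop : Subgroup.closure (f '' S) = ⊤ := by
    rw [eq_top_iff]
    rintro g -
    induction g using QuotientGroup.induction_on with
    | H w =>
      have hf : ∀ v, f v ∈ Subgroup.closure (f '' S) := by
        rintro ⟨_, x, hx, y, hy, rfl⟩
        obtain ⟨N, hN⟩ := exists_nat_ge (dist x y / R)
        rw [div_le_iff₀ hR] at hN
        exact key N x y hx hy (by linarith)
      induction w using FreeGroup.induction_on with
      | C1 => exact one_mem _
      | of v => exact hf v
      | inv_of v _ => exact inv_mem (hf v)
      | mul a b ha hb => exact mul_mem ha hb
  exact Group.fg_iff.2 ⟨f '' S, htop, hS.image f⟩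
end

section
/- Let r : ℤ → ℝ be strictly increasing with r(n) → +∞ as n → +∞ and r(n) → −∞ as n → −∞, let D = r(ℤ), let t(i) = r(i) − r(i−1) for i ∈ ℤ, and let Σ = {t(i) : i ∈ ℤ} ⊆ ℝ. Then G_D is isomorphic to the quotient of the free group on Σ by the normal subgroup generated by the elements (u₁)·(u₂)⋯(u_m)·((v₁)·(v₂)⋯(v_n))⁻¹ over all pairs of words u = (u₁,…,u_m) and v = (v₁,…,v_n) over Σ which occur in D and have equal length u₁+⋯+u_m = v₁+⋯+v_n. -/
open Pointwise

/-- The gap alphabet `Σ = {t i : i ∈ ℤ}` of a gap sequence `t : ℤ → ℝ`. -/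
def gapAlphabet (t : ℤ → ℝ) : Set ℝ := Set.range t

/-- A word `w` over `Σ` occurs in the point-set if its letters are consecutive gaps:
`w ≠ []` and there is `k ∈ ℤ` with `w j = t (k + j)` for all positions `j`. -/
def OccursIn (t : ℤ → ℝ) (w : List ↥(gapAlphabet t)) : Prop :=
  w ≠ [] ∧ ∃ k : ℤ, ∀ (j : ℕ) (h : j < w.length), ((w.get ⟨j, h⟩ : ℝ)) = t (k + j)

/-- The relators `(u₁)⋯(u_m)·((v₁)⋯(v_n))⁻¹` over all pairs of occurring words `u`, `v` of
equal length `u₁+⋯+u_m = v₁+⋯+v_n`. -/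
def gapRelators (t : ℤ → ℝ) : Set (FreeGroup ↥(gapAlphabet t)) :=
  {r | ∃ u v : List ↥(gapAlphabet t), OccursIn t u ∧ OccursIn t v ∧
    (u.map (fun x => (x : ℝ))).sum = (v.map (fun x => (x : ℝ))).sum ∧
    r = (u.map FreeGroup.of).prod * ((v.map FreeGroup.of).prod)⁻¹}

theorem aux_primitive {G : Type*} [Group G] (g : ℤ → G) :
    ∃ P : ℤ → G, ∀ i, g i = (P (i - 1))⁻¹ * P i := by
  let A : ℕ → G := fun n => Nat.rec 1 (fun n p => p * g (n + 1)) n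
  let B : ℕ → G := fun n => Nat.rec 1 (fun n p => p * (g (-n))⁻¹) n
  have hA : ∀ n : ℕ, A (n + 1) = A n * g (n + 1) := fun n => rfl
  have hB : ∀ n : ℕ, B (n + 1) = B n * (g (-n))⁻¹ := fun n => rfl
  refine ⟨fun i => if 0 ≤ i then A i.toNat else B (-i).toNat, fun i => ?_⟩
  rcases lt_trichotomy i 0 with h | h | h
  · obtain ⟨n, rfl⟩ : ∃ n : ℕ, i = -n := ⟨(-i).toNat, by omega⟩
    have h1 : ¬ (0 : ℤ) ≤ -n - 1 := by omega
    have h2 : ¬ (0 : ℤ) ≤ -n := by omega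
    have h3 : (-(-(n : ℤ) - 1)).toNat = n + 1 := by omega
    have h4 : (-(-(n : ℤ))).toNat = n := by omega
    simp only [h1, h2, if_false, h3, h4, hB]
    group
  · subst h
    have := hB 0
    simp only [Nat.cast_zero, neg_zero, zero_add] at this
    have h0 : A 0 = 1 := rfl
    have h0' : B 0 = 1 := rfl
    simp [this, h0, h0']
  · obtain ⟨n, rfl⟩ : ∃ n : ℕ, i = n + 1 := ⟨(i - 1).toNat, by omega⟩
    have h1 : (0 : ℤ) ≤ (n : ℤ) + 1 - 1 := by omega
    have h2 : (0 : ℤ) ≤ (n : ℤ) + 1 := by omega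
    have h3 : ((n : ℤ) + 1 - 1).toNat = n := by omega
    have h4 : ((n : ℤ) + 1).toNat = n + 1 := by omega
    simp only [h1, h2, if_true, h3, h4, hA]
    group

theorem aux_inv {G : Type*} [Group G] (a b c d : G) (h : a⁻¹ * b = c⁻¹ * d) :
    b⁻¹ * a = d⁻¹ * c := by
  have := congrArg (fun x => x⁻¹) h
  simpa using this

theorem aux_const {α : Type*} (f : ℤ → α) (h : ∀ i, f i = f (i - 1)) (i : ℤ) : f i = f 0 := by
  induction i using Int.induction_on with
  | zero => rfl
  | succ n ih => rw [h, ← ih]; congr 1; ring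
  | pred n ih => rw [← h, ih]

theorem aux_tele {G : Type*} [Group G] (p : ℤ → G) (k : ℤ) (m : ℕ) :
    ((List.range m).map (fun j : ℕ => (p (k + j - 1))⁻¹ * p (k + j))).prod
      = (p (k - 1))⁻¹ * p (k + m - 1) := by
  induction m with
  | zero => simp
  | succ n ih =>
    rw [List.range_succ, List.map_append, List.prod_append, ih]
    have : k + ((n + 1 : ℕ) : ℤ) - 1 = k + n := by push_cast; ring
    rw [this]
    simp

theorem aux_tele_add (p : ℤ → ℝ) (k : ℤ) (m : ℕ) :
    ((List.range m).map (fun j : ℕ => p (k + j) - p (k + j - 1))).sum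
      = p (k + m - 1) - p (k - 1) := by
  induction m with
  | zero => simp
  | succ n ih =>
    rw [List.range_succ, List.map_append, List.sum_append, ih]
    have : k + ((n + 1 : ℕ) : ℤ) - 1 = k + n := by push_cast; ring
    rw [this]
    simp

def auxTau (t : ℤ → ℝ) (i : ℤ) : ↥(gapAlphabet t) := ⟨t i, i, rfl⟩

def auxWord (t : ℤ → ℝ) (k : ℤ) (m : ℕ) : List ↥(gapAlphabet t) :=
  (List.range m).map (fun j : ℕ => auxTau t (k + j))

theorem auxWord_occurs (t : ℤ → ℝ) (k : ℤ) (m : ℕ) (hm : 0 < m) :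
    OccursIn t (auxWord t k m) := by
  refine ⟨?_, k, ?_⟩
  · intro h
    have := congrArg List.length h
    simp [auxWord] at this
    omega
  · intro j h
    simp [auxWord, auxTau]

theorem occurs_eq (t : ℤ → ℝ) (u : List ↥(gapAlphabet t)) (h : OccursIn t u) :
    ∃ k m, 0 < m ∧ u = auxWord t k m := by
  obtain ⟨h0, k, hk⟩ := h
  refine ⟨k, u.length, List.length_pos_iff.2 h0, ?_⟩
  apply List.ext_getElem
  · simp [auxWord]
  · intro j h1 h2
    apply Subtype.ext
    have := hk j h1
    simpa [auxWord, auxTau] using this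

theorem auxWord_sum (r t : ℤ → ℝ) (ht : ∀ i : ℤ, t i = r i - r (i - 1)) (k : ℤ) (m : ℕ) :
    ((auxWord t k m).map (fun x => (x : ℝ))).sum = r (k + m - 1) - r (k - 1) := by
  rw [← aux_tele_add, auxWord]
  simp [auxTau, ht, Function.comp_def, List.map_eq_flatMap, List.flatMap_assoc]

theorem auxWord_prod {G : Type*} [Group G] (t : ℤ → ℝ) (φ : FreeGroup ↥(gapAlphabet t) →* G)
    (p : ℤ → G) (hp : ∀ i, φ (FreeGroup.of (auxTau t i)) = (p (i - 1))⁻¹ * p i)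
    (k : ℤ) (m : ℕ) :
    φ ((auxWord t k m).map FreeGroup.of).prod = (p (k - 1))⁻¹ * p (k + m - 1) := by
  rw [← aux_tele, auxWord, List.map_map, map_list_prod, List.map_map]
  congr 1
  apply List.map_congr_left
  intro j _
  simp [hp]

/-- For a discrete point-set `D = r(ℤ) ⊆ ℝ` given by a strictly increasing unbounded
enumeration `r`, with gaps `t i = r i − r (i−1)`, the group `G_D` is isomorphic to the free
group on the gap alphabet `Σ` modulo the relators coming from pairs of occurring words of
equal length. -/
theorem GD_iso_gap_presentation (r : ℤ → ℝ) (hmono : StrictMono r)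
    (htop : Filter.Tendsto r Filter.atTop Filter.atTop)
    (hbot : Filter.Tendsto r Filter.atBot Filter.atBot)
    (t : ℤ → ℝ) (ht : ∀ i : ℤ, t i = r i - r (i - 1)) :
    Nonempty (GD (Set.range r) ≃*
      FreeGroup ↥(gapAlphabet t) ⧸ Subgroup.normalClosure (gapRelators t)) := by
  classical
  -- the two quotient maps
  set Q := FreeGroup ↥(gapAlphabet t) ⧸ Subgroup.normalClosure (gapRelators t) with hQ
  let π : FreeGroup ↥(gapAlphabet t) →* Q := QuotientGroup.mk' _
  let ρ : FreeGroup ↥(Set.range r - Set.range r) →* GD (Set.range r) := QuotientGroup.mk' _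
  obtain ⟨P, hP⟩ := aux_primitive (fun i => π (FreeGroup.of (auxTau t i)))
  -- well-definedness
  have key1 : ∀ (i j i' j' : ℤ), i < j → r i - r j = r i' - r j' →
      (P i)⁻¹ * P j = (P i')⁻¹ * P j' := by
    intro i j i' j' hij h
    have hij' : i' < j' := by
      have := hmono hij
      exact hmono.lt_iff_lt.1 (by linarith)
    obtain ⟨m, hm⟩ : ∃ m : ℕ, j = i + m := ⟨(j - i).toNat, by omega⟩
    obtain ⟨m', hm'⟩ : ∃ m : ℕ, j' = i' + m := ⟨(j' - i').toNat, by omega⟩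
    have e1 := auxWord_prod t π P hP (i + 1) m
    have e2 := auxWord_prod t π P hP (i' + 1) m'
    have s1 := auxWord_sum r t ht (i + 1) m
    have s2 := auxWord_sum r t ht (i' + 1) m'
    rw [show i + 1 + (m : ℤ) - 1 = j by omega, show i + 1 - 1 = i by omega] at e1 s1
    rw [show i' + 1 + (m' : ℤ) - 1 = j' by omega, show i' + 1 - 1 = i' by omega] at e2 s2
    rw [← e1, ← e2, ← mul_inv_eq_one, ← map_inv, ← map_mul]
    refine (QuotientGroup.eq_one_iff _).2 (Subgroup.subset_normalClosure ?_)
    exact ⟨_, _, auxWord_occurs t (i + 1) m (by omega), auxWord_occurs t (i' + 1) m' (by omega),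
      by rw [s1, s2]; linarith, rfl⟩
  have key : ∀ (i j i' j' : ℤ), r i - r j = r i' - r j' →
      (P i)⁻¹ * P j = (P i')⁻¹ * P j' := by
    intro i j i' j' h
    rcases lt_trichotomy i j with hij | hij | hij
    · exact key1 i j i' j' hij h
    · subst hij
      have : i' = j' := hmono.injective (by linarith)
      subst this
      simp
    · have := key1 j i j' i' hij (by linarith)
      exact aux_inv _ _ _ _ this
  have hex : ∀ d : ↥(Set.range r - Set.range r), ∃ q : Q, ∀ i j, (d : ℝ) = r i - r j →
      q = (P i)⁻¹ * P j := by
    rintro ⟨d, hd⟩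
    obtain ⟨_, ⟨i, rfl⟩, _, ⟨j, rfl⟩, rfl⟩ := Set.mem_sub.1 hd
    exact ⟨(P i)⁻¹ * P j, fun i' j' h => key _ _ _ _ h⟩
  choose F hF using hex
  let fwd : GD (Set.range r) →* Q := QuotientGroup.lift _ (FreeGroup.lift F) (by
    have : Subgroup.normalClosure (pointRelators (Set.range r)) ≤ (FreeGroup.lift F).ker := by
      apply Subgroup.normalClosure_le_normal
      rintro _ ⟨_, _, _, ⟨i, rfl⟩, ⟨j, rfl⟩, ⟨k, rfl⟩, rfl⟩
      rw [SetLike.mem_coe, MonoidHom.mem_ker]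
      simp only [map_mul, map_inv, FreeGroup.lift_apply_of]
      rw [hF _ i j rfl, hF _ j k rfl, hF _ i k rfl]
      group
    exact fun x hx => this hx)
  have hfwd : ∀ d, fwd (ρ (FreeGroup.of d)) = F d := fun d => by
    change FreeGroup.lift F (FreeGroup.of d) = _
    simp
  -- edges in GD
  let E : ℤ → ℤ → GD (Set.range r) := fun i j =>
    ρ (FreeGroup.of ⟨r i - r j, Set.sub_mem_sub ⟨i, rfl⟩ ⟨j, rfl⟩⟩)
  have hE : ∀ i j k, E i j * E j k = E i k := by
    intro i j k
    rw [← mul_inv_eq_one]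
    change ρ _ * ρ _ * (ρ _)⁻¹ = 1
    rw [← map_inv, ← map_mul, ← map_mul]
    exact (QuotientGroup.eq_one_iff _).2 (Subgroup.subset_normalClosure
      ⟨_, _, _, ⟨i, rfl⟩, ⟨j, rfl⟩, ⟨k, rfl⟩, rfl⟩)
  have hE' : ∀ i j, E i j = (E 0 i)⁻¹ * E 0 j := by
    intro i j
    rw [← hE 0 i j]; group
  have hEeq : ∀ i j i' j', r i - r j = r i' - r j' → E i j = E i' j' := by
    intro i j i' j' h
    change ρ _ = ρ _
    congr 2
    exact Subtype.ext h
  have hmem : ∀ σ : ↥(gapAlphabet t), -(σ : ℝ) ∈ Set.range r - Set.range r := by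
    rintro ⟨_, i, rfl⟩
    refine Set.mem_sub.2 ⟨_, ⟨i - 1, rfl⟩, _, ⟨i, rfl⟩, ?_⟩
    simp [ht]
  let β : FreeGroup ↥(gapAlphabet t) →* GD (Set.range r) :=
    FreeGroup.lift (fun σ => ρ (FreeGroup.of ⟨-(σ : ℝ), hmem σ⟩))
  have hβ : ∀ i, β (FreeGroup.of (auxTau t i)) = E (i - 1) i := by
    intro i
    simp only [β, FreeGroup.lift_apply_of]
    change ρ _ = ρ _
    congr 2
    apply Subtype.ext
    simp [auxTau, ht]
  have hβ' : ∀ i, β (FreeGroup.of (auxTau t i)) = (E 0 (i - 1))⁻¹ * E 0 i := by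
    intro i; rw [hβ, hE']
  let bwd : Q →* GD (Set.range r) := QuotientGroup.lift _ β (by
    have : Subgroup.normalClosure (gapRelators t) ≤ β.ker := by
      apply Subgroup.normalClosure_le_normal
      rintro _ ⟨u, v, hu, hv, hs, rfl⟩
      obtain ⟨k, m, hm, rfl⟩ := occurs_eq t u hu
      obtain ⟨k', m', hm', rfl⟩ := occurs_eq t v hv
      rw [auxWord_sum r t ht, auxWord_sum r t ht] at hs
      rw [SetLike.mem_coe, MonoidHom.mem_ker, map_mul, map_inv, mul_inv_eq_one,
        auxWord_prod t β (E 0) hβ', auxWord_prod t β (E 0) hβ', ← hE', ← hE']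
      exact hEeq _ _ _ _ (by linarith)
    exact fun x hx => this hx)
  have hbwd : ∀ x, bwd (π x) = β x := fun x => rfl
  have hbP : ∀ i j, bwd ((P i)⁻¹ * P j) = E i j := by
    have hc := aux_const (fun i => bwd (P i) * (E 0 i)⁻¹) (by
      intro i
      have h1 : P i = P (i - 1) * π (FreeGroup.of (auxTau t i)) := by
        have := hP i
        rw [this]; group
      rw [h1, map_mul, hbwd, hβ']
      group)
    intro i j
    have hi := hc i
    have hj := hc j
    rw [mul_inv_eq_iff_eq_mul] at hi hj
    rw [map_mul, map_inv, hi, hj, hE' i j]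
    group
  refine ⟨MonoidHom.toMulEquiv fwd bwd ?_ ?_⟩
  · apply QuotientGroup.monoidHom_ext
    apply FreeGroup.ext_hom
    rintro ⟨d, hd⟩
    obtain ⟨_, ⟨i, rfl⟩, _, ⟨j, rfl⟩, rfl⟩ := Set.mem_sub.1 hd
    change bwd (fwd (ρ (FreeGroup.of _))) = ρ (FreeGroup.of _)
    rw [hfwd, hF _ i j rfl, hbP]
  · apply QuotientGroup.monoidHom_ext
    apply FreeGroup.ext_hom
    rintro ⟨_, i, rfl⟩
    change fwd (β (FreeGroup.of (auxTau t i))) = π (FreeGroup.of (auxTau t i))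
    rw [hβ]
    change fwd (ρ (FreeGroup.of _)) = _
    rw [hfwd, hF _ (i - 1) i rfl]
    exact (hP i).symm
end

section
/- Let a, b be positive real numbers with a ≠ b and a/b rational, and let D = {n·(a+b) : n ∈ ℤ} ∪ {n·(a+b) + a : n ∈ ℤ} ⊆ ℝ (the point-set of the periodic tiling …ababab…). Then G_D is isomorphic to ℤ². -/
open Pointwise

def Dab (a b : ℝ) : Set ℝ := {x : ℝ | ∃ n : ℤ, x = n * (a + b)} ∪
        {x : ℝ | ∃ n : ℤ, x = n * (a + b) + a}

lemma Dab_l (a b : ℝ) (n : ℤ) : (n : ℝ) * (a + b) ∈ Dab a b := Or.inl ⟨n, rfl⟩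
lemma Dab_r (a b : ℝ) (n : ℤ) : (n : ℝ) * (a + b) + a ∈ Dab a b := Or.inr ⟨n, rfl⟩

section
variable {G : Type*} [Group G] {a b : ℝ} {c : ℝ → G}

lemma c_t (hc : ∀ x ∈ Dab a b, ∀ y ∈ Dab a b, ∀ z ∈ Dab a b, c (x - y) * c (y - z) = c (x - z))
    (m n : ℤ) : c (((m + n : ℤ) : ℝ) * (a + b)) = c (m * (a + b)) * c (n * (a + b)) := by
  have h := hc _ (Dab_l a b (m + n)) _ (Dab_l a b n) _ (Dab_l a b 0)
  have e1 : ((m + n : ℤ) : ℝ) * (a + b) - n * (a + b) = m * (a + b) := by push_cast; ring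
  rw [e1] at h
  simpa using h.symm

lemma c_tp (hc : ∀ x ∈ Dab a b, ∀ y ∈ Dab a b, ∀ z ∈ Dab a b, c (x - y) * c (y - z) = c (x - z))
    (n : ℤ) : c (n * (a + b)) = c (a + b) ^ n := by
  let f : Multiplicative ℤ →* G := MonoidHom.mk'
    (fun n => c ((n.toAdd : ℝ) * (a + b))) (fun x y => c_t hc x.toAdd y.toAdd)
  have h := map_zpow f (Multiplicative.ofAdd 1) n
  rw [← ofAdd_zsmul] at h
  simpa [f] using h

lemma c_u (hc : ∀ x ∈ Dab a b, ∀ y ∈ Dab a b, ∀ z ∈ Dab a b, c (x - y) * c (y - z) = c (x - z))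
    (n : ℤ) : c (n * (a + b) + a) = c (a + b) ^ n * c a := by
  have h := hc _ (Dab_r a b n) _ (Dab_r a b 0) _ (Dab_l a b 0)
  simpa [c_tp hc] using h.symm

lemma c_comm (hc : ∀ x ∈ Dab a b, ∀ y ∈ Dab a b, ∀ z ∈ Dab a b, c (x - y) * c (y - z) = c (x - z)) :
    Commute (c (a + b)) (c a) := by
  have h := hc _ (Dab_r a b 0) _ (Dab_l a b 0) _ (Dab_l a b (-1))
  have h2 := c_u hc 1
  have e : a - (-b + -a) = a + b + a := by ring
  simp at h h2
  rw [e] at h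
  exact h2.symm.trans h.symm

lemma c_v (hc : ∀ x ∈ Dab a b, ∀ y ∈ Dab a b, ∀ z ∈ Dab a b, c (x - y) * c (y - z) = c (x - z))
    (n : ℤ) : c (n * (a + b) - a) = c (a + b) ^ n * (c a)⁻¹ := by
  have h := hc _ (Dab_l a b n) _ (Dab_r a b 0) _ (Dab_l a b 0)
  simp [c_tp hc] at h
  exact eq_mul_inv_of_mul_eq h

end

lemma Dab_sub {a b d : ℝ} (h : d ∈ Dab a b - Dab a b) :
    ∃ k : ℤ × ℤ, d = k.1 * (a + b) + k.2 * a ∧ (k.2 = 0 ∨ k.2 = 1 ∨ k.2 = -1) := by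
  obtain ⟨x, hx, y, hy, rfl⟩ := h
  rcases hx with ⟨m, rfl⟩ | ⟨m, rfl⟩ <;> rcases hy with ⟨n, rfl⟩ | ⟨n, rfl⟩
  · exact ⟨(m - n, 0), by push_cast; ring, by simp⟩
  · exact ⟨(m - n, -1), by push_cast; ring, by simp⟩
  · exact ⟨(m - n, 1), by push_cast; ring, by simp⟩
  · exact ⟨(m - n, 0), by push_cast; ring, by simp⟩

lemma uniq_aux {a b : ℝ} (ha : 0 < a) (hb : 0 < b) (hab : a ≠ b) (n e : ℤ)
    (h : (n : ℝ) * (a + b) + e * a = 0) (he : -2 ≤ e) (he' : e ≤ 2) : n = 0 ∧ e = 0 := by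
  have h1 : (n : ℝ) < 2 := by
    by_contra hh
    have : (-2 : ℝ) ≤ e := by exact_mod_cast he
    nlinarith
  have h2 : (-2 : ℝ) < n := by
    by_contra hh
    have : (e : ℝ) ≤ 2 := by exact_mod_cast he'
    nlinarith
  have h1' : n < 2 := by exact_mod_cast h1
  have h2' : -2 < n := by exact_mod_cast h2
  interval_cases n <;> interval_cases e <;> norm_num at h ⊢ <;>
    first
    | linarith
    | (exact hab (by linarith))

lemma uniq {a b : ℝ} (ha : 0 < a) (hb : 0 < b) (hab : a ≠ b) (k l : ℤ × ℤ)
    (h : (k.1 : ℝ) * (a + b) + k.2 * a = l.1 * (a + b) + l.2 * a)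
    (hk : k.2 = 0 ∨ k.2 = 1 ∨ k.2 = -1) (hl : l.2 = 0 ∨ l.2 = 1 ∨ l.2 = -1) : k = l := by
  have := uniq_aux ha hb hab (k.1 - l.1) (k.2 - l.2) (by push_cast; linarith)
    (by omega) (by omega)
  ext <;> omega

theorem main_aux {a b : ℝ} (ha : 0 < a) (hb : 0 < b) (hab : a ≠ b) :
    Nonempty (GD (Dab a b) ≃* Multiplicative (ℤ × ℤ)) := by
  classical
  let c : ℝ → GD (Dab a b) := fun d =>
    if h : d ∈ Dab a b - Dab a b then
      QuotientGroup.mk' (Subgroup.normalClosure (pointRelators (Dab a b))) (FreeGroup.of ⟨d, h⟩)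
    else 1
  have cdef : ∀ d (h : d ∈ Dab a b - Dab a b), c d =
      QuotientGroup.mk' (Subgroup.normalClosure (pointRelators (Dab a b)))
        (FreeGroup.of ⟨d, h⟩) := fun d h => dif_pos h
  have hc : ∀ x ∈ Dab a b, ∀ y ∈ Dab a b, ∀ z ∈ Dab a b,
      c (x - y) * c (y - z) = c (x - z) := by
    intro x hx y hy z hz
    rw [cdef _ (Set.sub_mem_sub hx hy), cdef _ (Set.sub_mem_sub hy hz),
      cdef _ (Set.sub_mem_sub hx hz), ← mul_inv_eq_one, ← map_inv, ← map_mul, ← map_mul]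
    exact (QuotientGroup.eq_one_iff _).2
      (Subgroup.subset_normalClosure ⟨x, y, z, hx, hy, hz, rfl⟩)
  have hcomm := c_comm hc
  choose k hk hk' using fun d : ↥(Dab a b - Dab a b) => Dab_sub d.2
  have kval : ∀ (d : ↥(Dab a b - Dab a b)) (l : ℤ × ℤ), d.1 = l.1 * (a + b) + l.2 * a →
      (l.2 = 0 ∨ l.2 = 1 ∨ l.2 = -1) → k d = l := fun d l h h' =>
    uniq ha hb hab _ _ ((hk d).symm.trans h) (hk' d) h'
  let F : FreeGroup ↥(Dab a b - Dab a b) →* Multiplicative (ℤ × ℤ) :=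
    FreeGroup.lift (fun d => Multiplicative.ofAdd (k d))
  have hF : ∀ r ∈ Subgroup.normalClosure (pointRelators (Dab a b)), F r = 1 := by
    intro r hr
    have : Subgroup.normalClosure (pointRelators (Dab a b)) ≤ F.ker := by
      apply Subgroup.normalClosure_le_normal
      rintro _ ⟨x, y, z, hx, hy, hz, rfl⟩
      have key : ∀ x ∈ Dab a b, ∃ l : ℤ × ℤ, x = l.1 * (a + b) + l.2 * a ∧
          (l.2 = 0 ∨ l.2 = 1) := by
        rintro x (⟨n, rfl⟩ | ⟨n, rfl⟩)
        · exact ⟨(n, 0), by simp, by simp⟩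
        · exact ⟨(n, 1), by simp, by simp⟩
      obtain ⟨l1, e1, h1⟩ := key x hx
      obtain ⟨l2, e2, h2⟩ := key y hy
      obtain ⟨l3, e3, h3⟩ := key z hz
      have a1 := kval ⟨x - y, Set.sub_mem_sub hx hy⟩ (l1 - l2)
        (by simp [e1, e2]; ring) (by simp only [Prod.snd_sub]; omega)
      have a2 := kval ⟨y - z, Set.sub_mem_sub hy hz⟩ (l2 - l3)
        (by simp [e2, e3]; ring) (by simp only [Prod.snd_sub]; omega)
      have a3 := kval ⟨x - z, Set.sub_mem_sub hx hz⟩ (l1 - l3)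
        (by simp [e1, e3]; ring) (by simp only [Prod.snd_sub]; omega)
      change F _ = 1
      simp only [F, map_mul, map_inv, FreeGroup.lift_apply_of, a1, a2, a3]
      rw [← ofAdd_add, ← ofAdd_neg, ← ofAdd_add]
      simp
    exact this hr
  let f : GD (Dab a b) →* Multiplicative (ℤ × ℤ) := QuotientGroup.lift _ F hF
  have fc : ∀ d (h : d ∈ Dab a b - Dab a b), f (c d) = Multiplicative.ofAdd (k ⟨d, h⟩) := by
    intro d h
    rw [cdef d h]
    change F (FreeGroup.of ⟨d, h⟩) = _
    simp only [F, FreeGroup.lift_apply_of]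
  let s : Multiplicative (ℤ × ℤ) →* GD (Dab a b) := MonoidHom.mk'
    (fun l => c (a + b) ^ l.toAdd.1 * c a ^ l.toAdd.2) (by
      intro x y
      simp only [toAdd_mul, Prod.fst_add, Prod.snd_add, zpow_add]
      have := (hcomm.zpow_zpow y.toAdd.1 x.toAdd.2).eq
      simp only [mul_assoc]
      rw [← mul_assoc (c a ^ _) (c (a + b) ^ _), ← this, mul_assoc])
  have sdef : ∀ l : ℤ × ℤ, s (Multiplicative.ofAdd l) = c (a + b) ^ l.1 * c a ^ l.2 :=
    fun l => rfl
  have hsf : s.comp f = MonoidHom.id _ := by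
    apply QuotientGroup.monoidHom_ext
    apply FreeGroup.ext_hom
    intro d
    change s (F (FreeGroup.of d)) = QuotientGroup.mk' _ (FreeGroup.of d)
    rw [← cdef d.1 d.2]
    simp only [F, FreeGroup.lift_apply_of]
    rw [sdef]
    conv_rhs => rw [hk d]
    rcases hk' d with h | h | h <;> rw [h]
    · simp [c_tp hc]
    · simp [c_u hc]
    · have := c_v hc (k d).1
      simpa [sub_eq_add_neg] using this.symm
  have ma : a ∈ Dab a b - Dab a b := by
    simpa using Set.sub_mem_sub (Dab_r a b 0) (Dab_l a b 0)
  have mp : a + b ∈ Dab a b - Dab a b := by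
    simpa using Set.sub_mem_sub (Dab_l a b 1) (Dab_l a b 0)
  have hfs : f.comp s = MonoidHom.id _ := by
    refine MonoidHom.ext fun l => ?_
    obtain ⟨l, rfl⟩ := Multiplicative.ofAdd.surjective l
    rw [MonoidHom.comp_apply, sdef, map_mul, map_zpow, map_zpow, fc _ ma, fc _ mp,
      kval ⟨a, ma⟩ (0, 1) (by simp) (by simp), kval ⟨a + b, mp⟩ (1, 0) (by simp) (by simp),
      ← ofAdd_zsmul, ← ofAdd_zsmul, ← ofAdd_add]
    simp
  exact ⟨MonoidHom.toMulEquiv f s hsf hfs⟩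

/-- For the point-set of the periodic tiling `…ababab…` with `a ≠ b` and `a/b ∈ ℚ`, the
universal group `G_D` is isomorphic to `ℤ²`. -/
theorem GD_periodic_ab {a b : ℝ} (ha : 0 < a) (hb : 0 < b) (hab : a ≠ b)
    (hrat : ∃ q : ℚ, a / b = (q : ℝ)) :
    Nonempty (GD ({x : ℝ | ∃ n : ℤ, x = n * (a + b)} ∪
        {x : ℝ | ∃ n : ℤ, x = n * (a + b) + a}) ≃*
      Multiplicative (ℤ × ℤ)) := main_aux ha hb hab
end

section
/- Let a, b be positive real numbers with a/b irrational, and let D = {−n·a : n ∈ ℕ} ∪ {m·b : m ∈ ℕ} ⊆ ℝ (the point-set of the tiling …aaabbb…). Then G_D is a free group of rank 2 (isomorphic to the free group on two generators). -/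
open Pointwise

/-- class of a difference -/
def gdCls {E : Type*} [AddGroup E] (D : Set E) (d : E) (hd : d ∈ D - D) : GD D :=
  QuotientGroup.mk (FreeGroup.of ⟨d, hd⟩)

theorem gdCls_mul {E : Type*} [AddGroup E] (D : Set E) {x y z : E} (hx : x ∈ D) (hy : y ∈ D)
    (hz : z ∈ D) : gdCls D (x - y) (Set.sub_mem_sub hx hy) * gdCls D (y - z) (Set.sub_mem_sub hy hz)
      = gdCls D (x - z) (Set.sub_mem_sub hx hz) := by
  rw [← mul_inv_eq_one]
  unfold gdCls
  rw [← QuotientGroup.mk_mul, ← QuotientGroup.mk_inv, ← QuotientGroup.mk_mul,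
    QuotientGroup.eq_one_iff]
  exact Subgroup.subset_normalClosure ⟨x, y, z, hx, hy, hz, rfl⟩

theorem gdCls_congr {E : Type*} [AddGroup E] (D : Set E) {d d' : E} (h : d = d')
    (hd : d ∈ D - D) (hd' : d' ∈ D - D) : gdCls D d hd = gdCls D d' hd' := by
  subst h; rfl

theorem gdCls_self {E : Type*} [AddGroup E] (D : Set E) {x : E} (hx : x ∈ D) :
    gdCls D (x - x) (Set.sub_mem_sub hx hx) = 1 := by
  have := gdCls_mul D hx hx hx
  simpa using this

/-- the coordinates word -/
def wordF (p q : ℤ) : FreeGroup (Fin 2) :=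
  if 0 ≤ p ∧ 0 ≤ q then FreeGroup.of 1 ^ p * FreeGroup.of 0 ^ q
  else FreeGroup.of 0 ^ q * FreeGroup.of 1 ^ p

theorem wordF_sub {p q p' q' : ℤ} (h : (0 ≤ p ∧ q = 0) ∨ (p = 0 ∧ q ≤ 0))
    (h' : (0 ≤ p' ∧ q' = 0) ∨ (p' = 0 ∧ q' ≤ 0)) :
    wordF (p - p') (q - q') = (FreeGroup.of 1 ^ p * FreeGroup.of 0 ^ q) *
      (FreeGroup.of 1 ^ p' * FreeGroup.of 0 ^ q')⁻¹ := by
  unfold wordF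
  rcases h with ⟨h, rfl⟩ | ⟨rfl, h⟩ <;> rcases h' with ⟨h', rfl⟩ | ⟨rfl, h'⟩
  · simp [zpow_sub]
  · rw [if_pos (by omega)]; simp
  · split_ifs with hc
    · have h1 : p' = 0 := by omega
      subst h1; simp
    · simp
  · simp [zpow_sub]

theorem irr_unique {a b : ℝ} (hb : 0 < b) (hirr : Irrational (a / b)) {p q p' q' : ℤ}
    (h : (p : ℝ) * b + q * a = p' * b + q' * a) : p = p' ∧ q = q' := by
  have hq : q = q' := by
    by_contra hne
    have hne' : (q : ℝ) - q' ≠ 0 := by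
      rw [sub_ne_zero]; exact_mod_cast hne
    apply hirr
    refine ⟨((p' - p : ℤ) : ℚ) / ((q - q' : ℤ) : ℚ), ?_⟩
    push_cast
    rw [div_eq_div_iff hne' hb.ne']
    linarith
  subst hq
  refine ⟨?_, rfl⟩
  have : (p : ℝ) * b = p' * b := by linarith
  exact_mod_cast mul_right_cancel₀ hb.ne' this

/-- For the point-set of the tiling `…aaabbb…` with `a/b` irrational, the universal group
`G_D` is free of rank 2. -/
theorem GD_half_ab_free {a b : ℝ} (ha : 0 < a) (hb : 0 < b) (hirr : Irrational (a / b)) :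
    Nonempty (GD ({x : ℝ | ∃ n : ℕ, x = -(n * a)} ∪ {x : ℝ | ∃ m : ℕ, x = m * b}) ≃*
      FreeGroup (Fin 2)) := by
  generalize hD : ({x : ℝ | ∃ n : ℕ, x = -(n * a)} ∪ {x : ℝ | ∃ m : ℕ, x = m * b}) = D
  have hA : ∀ n : ℕ, -((n : ℝ) * a) ∈ D := fun n => hD ▸ Or.inl ⟨n, rfl⟩
  have hB : ∀ n : ℕ, ((n : ℝ) * b) ∈ D := fun n => hD ▸ Or.inr ⟨n, rfl⟩
  have h0 : (0 : ℝ) ∈ D := by simpa using hB 0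
  have hA1 : -a ∈ D := by simpa using hA 1
  have hB1 : b ∈ D := by simpa using hB 1
  have hco : ∀ x ∈ D, ∃ p q : ℤ, x = p * b + q * a ∧ ((0 ≤ p ∧ q = 0) ∨ (p = 0 ∧ q ≤ 0)) := by
    intro x hx
    rw [← hD] at hx
    rcases hx with ⟨n, rfl⟩ | ⟨n, rfl⟩
    · exact ⟨0, -n, by push_cast; ring, by right; simp⟩
    · exact ⟨n, 0, by push_cast; ring, by left; simp⟩
  have hex : ∀ d : ↥(D - D), ∃ p q : ℤ, (d : ℝ) = p * b + q * a := by
    rintro ⟨d, x, hx, y, hy, rfl⟩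
    obtain ⟨p, q, h, -⟩ := hco x hx
    obtain ⟨p', q', h', -⟩ := hco y hy
    refine ⟨p - p', q - q', ?_⟩
    simp only [h, h']; push_cast; ring
  choose P Q hPQ using hex
  have hval : ∀ (d : ↥(D - D)) (p q : ℤ), (d : ℝ) = p * b + q * a →
      wordF (P d) (Q d) = wordF p q := by
    intro d p q h
    obtain ⟨h1, h2⟩ := irr_unique hb hirr ((hPQ d).symm.trans h)
    rw [h1, h2]
  let f0 : FreeGroup ↥(D - D) →* FreeGroup (Fin 2) := FreeGroup.lift fun d => wordF (P d) (Q d)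
  have hf0 : Subgroup.normalClosure (pointRelators D) ≤ f0.ker := by
    apply Subgroup.normalClosure_le_normal
    rintro r ⟨x, y, z, hx, hy, hz, rfl⟩
    obtain ⟨p, q, h, k⟩ := hco x hx
    obtain ⟨p', q', h', k'⟩ := hco y hy
    obtain ⟨p'', q'', h'', k''⟩ := hco z hz
    simp only [SetLike.mem_coe, MonoidHom.mem_ker, map_mul, map_inv, f0, FreeGroup.lift_apply_of]
    rw [hval _ (p - p') (q - q') (by simp only [h, h']; push_cast; ring),
      hval _ (p' - p'') (q' - q'') (by simp only [h', h'']; push_cast; ring),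
      hval _ (p - p'') (q - q'') (by simp only [h, h'']; push_cast; ring),
      wordF_sub k k', wordF_sub k' k'', wordF_sub k k'']
    group
  let f : GD D →* FreeGroup (Fin 2) := QuotientGroup.lift _ f0 hf0
  have hf : ∀ d hd (p q : ℤ), d = p * b + q * a → f (gdCls D d hd) = wordF p q := by
    intro d hd p q h
    have : f (gdCls D d hd) = f0 (FreeGroup.of ⟨d, hd⟩) := rfl
    rw [this]
    simp only [f0, FreeGroup.lift_apply_of]
    exact hval _ _ _ h
  let α : GD D := (gdCls D (-a - 0) (Set.sub_mem_sub hA1 h0))⁻¹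
  let β : GD D := gdCls D (b - 0) (Set.sub_mem_sub hB1 h0)
  let g : FreeGroup (Fin 2) →* GD D := FreeGroup.lift ![α, β]
  have hg0 : g (FreeGroup.of 0) = α := by simp [g]
  have hg1 : g (FreeGroup.of 1) = β := by simp [g]
  have huA : ∀ n : ℕ, gdCls D (-((n : ℝ) * a) - 0) (Set.sub_mem_sub (hA n) h0) = α⁻¹ ^ n := by
    intro n
    induction n with
    | zero =>
      rw [pow_zero, ← gdCls_self D h0]
      exact gdCls_congr D (by simp) _ _
    | succ n ih =>
      rw [← gdCls_mul D (hA (n+1)) (hA n) h0, ih, pow_succ']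
      congr 1
      simp only [α, inv_inv]
      exact gdCls_congr D (by push_cast; ring) _ _
  have huB : ∀ n : ℕ, gdCls D (((n : ℝ) * b) - 0) (Set.sub_mem_sub (hB n) h0) = β ^ n := by
    intro n
    induction n with
    | zero =>
      rw [pow_zero, ← gdCls_self D h0]
      exact gdCls_congr D (by simp) _ _
    | succ n ih =>
      rw [← gdCls_mul D (hB (n+1)) (hB n) h0, ih, pow_succ']
      congr 1
      exact gdCls_congr D (by push_cast; ring) _ _
  have hfα : f α = FreeGroup.of 0 := by
    simp only [α, map_inv]
    rw [hf _ _ 0 (-1) (by push_cast; ring)]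
    simp [wordF]
  have hfβ : f β = FreeGroup.of 1 := by
    simp only [β]
    rw [hf _ _ 1 0 (by push_cast; ring)]
    simp [wordF]
  have hgf0 : ∀ x (hx : x ∈ D), g (f (gdCls D (x - 0) (Set.sub_mem_sub hx h0))) =
      gdCls D (x - 0) (Set.sub_mem_sub hx h0) := by
    intro x hx
    have hx' := hx
    rw [← hD] at hx'
    rcases hx' with ⟨n, rfl⟩ | ⟨n, rfl⟩
    · rw [huA, map_pow, map_inv, hfα, map_pow, map_inv, hg0]
    · rw [huB, map_pow, hfβ, map_pow, hg1]
  have hgf : ∀ x y (hx : x ∈ D) (hy : y ∈ D), g (f (gdCls D (x - y) (Set.sub_mem_sub hx hy))) =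
      gdCls D (x - y) (Set.sub_mem_sub hx hy) := by
    intro x y hx hy
    rw [eq_mul_inv_of_mul_eq (gdCls_mul D hx hy h0), map_mul, map_mul, map_inv, map_inv,
      hgf0 x hx, hgf0 y hy]
  refine ⟨MonoidHom.toMulEquiv f g ?_ ?_⟩
  · apply QuotientGroup.monoidHom_ext
    apply FreeGroup.ext_hom
    rintro ⟨d, x, hx, y, hy, rfl⟩
    exact hgf x y hx hy
  · apply FreeGroup.ext_hom
    intro i
    fin_cases i
    · exact (congrArg f hg0).trans hfα
    · exact (congrArg f hg1).trans hfβ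
end

section
/- Let Σ be an alphabet and L a factorial language over Σ. Then the universal group U(L) of L (equivalently, of the connected tiling semigroup S(L)) is isomorphic to the free group on the set L₂ = {w ∈ L : w has length 2}. -/
/-- A factorial language: a set of nonempty words closed under taking nonempty contiguous
factors. -/
def IsFactorial {α : Type*} (L : Set (List α)) : Prop :=
  (∀ w ∈ L, w ≠ []) ∧ ∀ u v w : List α, u ++ v ++ w ∈ L → v ≠ [] → v ∈ L

/-- The relators `(u)·(v)·((u∘v))⁻¹` over all `u, v ∈ L` for which `u∘v` is defined, i.e.
the last letter of `u` equals the first letter of `v` and `u ++ tail v ∈ L`; then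
`u∘v = u ++ tail v`. -/
def langRelators {α : Type*} (L : Set (List α)) : Set (FreeGroup ↥L) :=
  {r | ∃ u v uv : ↥L,
    (u : List α).getLast? = (v : List α).head? ∧
    (uv : List α) = (u : List α) ++ (v : List α).tail ∧
    r = FreeGroup.of u * FreeGroup.of v * (FreeGroup.of uv)⁻¹}

/-- The universal group `U(L)` of a language `L` (the universal group of the connected
tiling semigroup `S(L)`). -/
abbrev LangGroup {α : Type*} (L : Set (List α)) : Type _ :=
  FreeGroup ↥L ⧸ Subgroup.normalClosure (langRelators L)

open Classical in
/-- Product of the length-two factors of a word. -/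
noncomputable def wordVal {α : Type*} (L : Set (List α)) :
    List α → FreeGroup ↥{w ∈ L | w.length = 2}
  | [] => 1
  | [_] => 1
  | a :: b :: t =>
    (if h : [a, b] ∈ L then FreeGroup.of ⟨[a, b], h, rfl⟩ else 1) * wordVal L (b :: t)

theorem wordVal_append {α : Type*} (L : Set (List α)) (v : List α) :
    ∀ u : List α, u ≠ [] → u.getLast? = v.head? →
      wordVal L (u ++ v.tail) = wordVal L u * wordVal L v
  | [], h, _ => absurd rfl h
  | [a], _, h => by
    cases v with
    | nil => simp at h
    | cons b t =>
      simp at h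
      subst h
      simp [wordVal]
  | a :: b :: t, _, h => by
    have ih := wordVal_append L v (b :: t) (by simp) (by simpa using h)
    simp only [List.cons_append, wordVal] at ih ⊢
    rw [ih, mul_assoc]

theorem langRel_mul {α : Type*} (L : Set (List α)) (u v uv : ↥L)
    (h1 : (u : List α).getLast? = (v : List α).head?)
    (h2 : (uv : List α) = (u : List α) ++ (v : List α).tail) :
    (QuotientGroup.mk' (Subgroup.normalClosure (langRelators L)) (FreeGroup.of u)) *
      (QuotientGroup.mk' (Subgroup.normalClosure (langRelators L)) (FreeGroup.of v)) =
      (QuotientGroup.mk' (Subgroup.normalClosure (langRelators L)) (FreeGroup.of uv)) := by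
  rw [← mul_inv_eq_one, ← map_mul, ← map_inv, ← map_mul]
  exact (QuotientGroup.eq_one_iff _).2 (Subgroup.subset_normalClosure ⟨u, v, uv, h1, h2, rfl⟩)

/-- The map from the free group on two-letter words. -/
def backHom {α : Type*} (L : Set (List α)) :
    FreeGroup ↥{w ∈ L | w.length = 2} →* LangGroup L :=
  FreeGroup.lift fun w =>
    QuotientGroup.mk' (Subgroup.normalClosure (langRelators L)) (FreeGroup.of ⟨w.1, w.2.1⟩)

theorem backHom_wordVal {α : Type*} (L : Set (List α)) (hL : IsFactorial L) :
    ∀ (w : List α) (hw : w ∈ L), backHom L (wordVal L w) =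
      QuotientGroup.mk' (Subgroup.normalClosure (langRelators L)) (FreeGroup.of ⟨w, hw⟩)
  | [], hw => absurd rfl (hL.1 _ hw)
  | [a], hw => by
    have := langRel_mul L ⟨[a], hw⟩ ⟨[a], hw⟩ ⟨[a], hw⟩ rfl rfl
    rw [wordVal, map_one]
    exact (mul_eq_left.1 this).symm
  | a :: b :: t, hw => by
    have h1 : [a, b] ∈ L := hL.2 [] [a, b] t (by simpa using hw) (by simp)
    have h2 : b :: t ∈ L := hL.2 [a] (b :: t) [] (by simpa using hw) (by simp)
    have := langRel_mul L ⟨[a, b], h1⟩ ⟨b :: t, h2⟩ ⟨a :: b :: t, hw⟩ rfl rfl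
    rw [wordVal, map_mul, backHom_wordVal L hL (b :: t) h2, dif_pos h1, ← this]
    congr 1

/-- The map to the free group on two-letter words. -/
noncomputable def fwdHom {α : Type*} (L : Set (List α)) (hL : IsFactorial L) :
    LangGroup L →* FreeGroup ↥{w ∈ L | w.length = 2} :=
  QuotientGroup.lift _ (FreeGroup.lift fun w : ↥L => wordVal L w.1) (by
    intro x hx
    have : Subgroup.normalClosure (langRelators L) ≤
        (FreeGroup.lift fun w : ↥L => wordVal L w.1).ker := by
      apply Subgroup.normalClosure_le_normal
      rintro _ ⟨u, v, uv, h1, h2, rfl⟩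
      simp only [SetLike.mem_coe, MonoidHom.mem_ker, map_mul, map_inv, FreeGroup.lift_apply_of]
      rw [h2, wordVal_append L v.1 u.1 (hL.1 _ u.2) h1, mul_inv_cancel]
    exact this hx)

/-- For a factorial language `L`, the universal group `U(L)` is isomorphic to the free group
on the set `L₂` of words of length 2 in `L`. -/
theorem langGroup_iso_freeGroup_L2 {α : Type*} (L : Set (List α)) (hL : IsFactorial L) :
    Nonempty (LangGroup L ≃* FreeGroup ↥{w ∈ L | w.length = 2}) := by
  refine ⟨MonoidHom.toMulEquiv (fwdHom L hL) (backHom L) ?_ ?_⟩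
  · apply QuotientGroup.monoidHom_ext
    apply FreeGroup.ext_hom
    intro w
    have := backHom_wordVal L hL w.1 w.2
    simpa [fwdHom] using this
  · apply FreeGroup.ext_hom
    rintro ⟨w, hw, h2⟩
    obtain ⟨a, b, rfl⟩ := List.length_eq_two.1 h2
    simp [fwdHom, backHom, wordVal, hw]
end
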